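/- Let d, K ≥ 1 be integers, τ = r + ν with r ∈ ℕ and ν ∈ (0,1], and B > 0. There exists a constant C > 0, depending only on d, τ and B, such that for every integer k ≥ 1 and every κ ∈ C_{τ,d,K,B} there exists a ReLU network φ : ℝ^d → ℝ^K belonging to F_{d,K}(W, D, M) with width W ≤ C · 2^{2dk/τ} · k, depth D = (k+1)(d+r) + 2, and norm constraint M ≤ C · 2^{2(d+1)k/τ}, satisfying ( ∫_{[0,1]^d} ‖κ(x) − φ(x)‖₂² dx )^{1/2} ≤ C · √K · 2^{−2k}. In particular, ‖κ − φ‖_{L²([0,1]^d)} ≲ √K · M^{−τ/(d+1)} with W ≍ M^{d/(d+1)} log M and D ≍ log M. -/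

import Mathlib

open scoped BigOperators

noncomputable section

/-- Forward pass of the hidden layers of a ReLU network, in a padded representation:
states are `ℕ → ℝ`, the matrix `W l` and bias `b l` give layer `l`, `w l` is the width
of layer `l` (only the first `w l` coordinates are fed into the next layer), and the
ReLU activation `t ↦ max 0 t` is applied after every hidden affine layer. -/
def hiddenLayers (W : ℕ → ℕ → ℕ → ℝ) (b : ℕ → ℕ → ℝ) (w : ℕ → ℕ) :
    ℕ → (ℕ → ℝ) → (ℕ → ℝ)
  | 0, x => x
  | (L + 1), x => fun i =>
      max 0 ((∑ j ∈ Finset.range (w L), W L i j * hiddenLayers W b w L x j) + b L i)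

/-- `φ : ℝ^d → ℝ^K` belongs to the norm-constrained ReLU network class
`F_{d,K}(𝒲, D, M)`: there is a ReLU network of depth `D' ≤ D`, hidden widths at most
`𝒲`, realizing `φ` as `x ↦ W_{D'} σ(W_{D'−1} σ(⋯ σ(W_0 x + b_0) ⋯) + b_{D'−1}) + b_{D'}`,
whose layer `‖(W_l, b_l)‖_{1,∞}` norms (the maximum over rows of the ℓ¹ norm of the row
of the augmented matrix `(W b)`) admit bounds `Mi l` with
`Mi D' · ∏_{l<D'} max(Mi l, 1) ≤ M`. -/
def MemNNClass (d K 𝒲 D : ℕ) (M : ℝ) (φ : (Fin d → ℝ) → Fin K → ℝ) : Prop :=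
  ∃ D' : ℕ, D' ≤ D ∧
    ∃ (w : ℕ → ℕ) (W : ℕ → ℕ → ℕ → ℝ) (b : ℕ → ℕ → ℝ) (Mi : ℕ → ℝ),
      w 0 = d ∧ w (D' + 1) = K ∧
      (∀ l : ℕ, 1 ≤ l → l ≤ D' → w l ≤ 𝒲) ∧
      (∀ l : ℕ, l ≤ D' → ∀ i : ℕ, i < w (l + 1) →
        (∑ j ∈ Finset.range (w l), |W l i j|) + |b l i| ≤ Mi l) ∧
      (∀ l : ℕ, 0 ≤ Mi l) ∧
      Mi D' * ∏ l ∈ Finset.range D', max (Mi l) 1 ≤ M ∧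
      ∀ (x : Fin d → ℝ) (i : Fin K),
        φ x i = (∑ j ∈ Finset.range (w D'),
            W D' (i : ℕ) j
              * hiddenLayers W b w D' (fun j => if h : j < d then x ⟨j, h⟩ else 0) j)
          + b D' (i : ℕ)

/-- `κ : [0,1]^d → ℝ^K` belongs to the Hölder class `C_{τ,d,K,B}` with `τ = r + ν`:
each coordinate `κ_i` is `r` times continuously differentiable on `[0,1]^d`, all its
partial derivatives `∂^α κ_i` of order `|α| ≤ r` are bounded by `B`, and the order-`r`
partial derivatives are `ν`-Hölder with constant `B`. -/
def MemHolderClass (r : ℕ) (ν : ℝ) (d K : ℕ) (B : ℝ)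
    (κ : (Fin d → ℝ) → Fin K → ℝ) : Prop :=
  ∀ i : Fin K,
    ContDiffOn ℝ r (fun x => κ x i) (Set.Icc (0 : Fin d → ℝ) 1) ∧
    (∀ m : ℕ, m ≤ r → ∀ x ∈ Set.Icc (0 : Fin d → ℝ) 1, ∀ α : Fin m → Fin d,
      |iteratedFDerivWithin ℝ m (fun x => κ x i) (Set.Icc (0 : Fin d → ℝ) 1) x
          (fun j => Pi.single (α j) 1)| ≤ B) ∧
    (∀ x ∈ Set.Icc (0 : Fin d → ℝ) 1, ∀ y ∈ Set.Icc (0 : Fin d → ℝ) 1, x ≠ y →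
      ∀ α : Fin r → Fin d,
      |iteratedFDerivWithin ℝ r (fun x => κ x i) (Set.Icc (0 : Fin d → ℝ) 1) x
            (fun j => Pi.single (α j) 1)
        - iteratedFDerivWithin ℝ r (fun x => κ x i) (Set.Icc (0 : Fin d → ℝ) 1) y
            (fun j => Pi.single (α j) 1)|
        ≤ B * ‖x - y‖ ^ ν)

/-- `LinC P S g`: `g` is an affine combination of the functions in `S` whose coefficient
`ℓ¹` norm (including the constant) is at most `P`. -/
def LinC {d : ℕ} (P : ℝ) (S : Finset ((Fin d → ℝ) → ℝ)) (g : (Fin d → ℝ) → ℝ) : Prop :=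
  ∃ (a : ((Fin d → ℝ) → ℝ) → ℝ) (b : ℝ),
    (∀ x, g x = (∑ f ∈ S, a f * f x) + b) ∧ (∑ f ∈ S, |a f|) + |b| ≤ P

/-- `Lay L n S`: the functions in `S` are units in layer `L` of a network with hidden widths
at most `n` and all row norms at most one. -/
def Lay {d : ℕ} : ℕ → ℕ → Finset ((Fin d → ℝ) → ℝ) → Prop
  | 0, _, S => ∀ f ∈ S, ∃ j : Fin d, f = fun x => x j
  | (L + 1), n, S => ∃ T : Finset ((Fin d → ℝ) → ℝ), Lay L n T ∧ S.card ≤ n ∧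
      ∀ g ∈ S, ∃ h, LinC 1 T h ∧ g = fun x => max 0 (h x)

/-- scalar functions representable with depth `L`, width `n` and norm `P`. -/
def Fn {d : ℕ} (L n : ℕ) (P : ℝ) (f : (Fin d → ℝ) → ℝ) : Prop :=
  ∃ S : Finset ((Fin d → ℝ) → ℝ), Lay L n S ∧ LinC P S f

namespace LinC
variable {d : ℕ} {P Q : ℝ} {S T : Finset ((Fin d → ℝ) → ℝ)} {f g : (Fin d → ℝ) → ℝ}

lemma nonneg (h : LinC P S f) : 0 ≤ P := by
  obtain ⟨a, b, -, h⟩ := h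
  exact le_trans (by positivity) h

lemma mono (h : LinC P S f) (hPQ : P ≤ Q) : LinC Q S f := by
  obtain ⟨a, b, h1, h2⟩ := h
  exact ⟨a, b, h1, h2.trans hPQ⟩

lemma subset (h : LinC P S f) (hST : S ⊆ T) : LinC P T f := by
  classical
  obtain ⟨a, b, h1, h2⟩ := h
  refine ⟨fun f => if f ∈ S then a f else 0, b, fun x => ?_, ?_⟩
  · rw [h1 x]
    congr 1
    rw [← Finset.sum_subset hST]
    · exact Finset.sum_congr rfl fun f hf => by simp [hf]
    · intro f _ hf; simp [hf]
  · refine le_trans (le_of_eq ?_) h2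
    congr 1
    rw [← Finset.sum_subset hST]
    · exact Finset.sum_congr rfl fun f hf => by simp [hf]
    · intro f _ hf; simp [hf]

lemma unit (h : f ∈ S) : LinC 1 S f := by
  classical
  refine ⟨fun g => if g = f then 1 else 0, 0, fun x => ?_, ?_⟩
  · simp [h]
  · have : ∀ g : (Fin d → ℝ) → ℝ, |if g = f then (1 : ℝ) else 0| = if g = f then 1 else 0 := by
      intro g; split_ifs <;> simp
    simp [this, h]

lemma const (c : ℝ) : LinC |c| S (fun _ => c) :=
  ⟨fun _ => 0, c, fun x => by simp, by simp⟩

lemma add (h : LinC P S f) (h' : LinC Q S g) : LinC (P + Q) S (fun x => f x + g x) := by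
  obtain ⟨a, b, h1, h2⟩ := h
  obtain ⟨a', b', h1', h2'⟩ := h'
  refine ⟨fun f => a f + a' f, b + b', fun x => ?_, ?_⟩
  · simp only [h1 x, h1' x, add_mul, Finset.sum_add_distrib]; ring
  · have := Finset.sum_le_sum (s := S) fun f _ => abs_add_le (a f) (a' f)
    rw [Finset.sum_add_distrib] at this
    linarith [abs_add_le b b']

lemma smul (c : ℝ) (h : LinC P S f) : LinC (|c| * P) S (fun x => c * f x) := by
  obtain ⟨a, b, h1, h2⟩ := h
  refine ⟨fun f => c * a f, c * b, fun x => ?_, ?_⟩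
  · simp only [h1 x, mul_add, Finset.mul_sum, mul_assoc]
  · simp only [abs_mul, ← Finset.mul_sum, ← mul_add]
    exact mul_le_mul_of_nonneg_left h2 (abs_nonneg c)

lemma sum {ι : Type*} (I : Finset ι) (p : ι → ℝ) (F : ι → (Fin d → ℝ) → ℝ)
    (h : ∀ i ∈ I, LinC (p i) S (F i)) : LinC (∑ i ∈ I, p i) S (fun x => ∑ i ∈ I, F i x) := by
  classical
  induction I using Finset.induction_on with
  | empty => simpa using const (S := S) (0 : ℝ)
  | insert a I ha ih =>
    simp only [Finset.sum_insert ha]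
    exact (h a (by simp)).add (ih fun i hi => h i (by simp [hi]))

end LinC

namespace Lay
variable {d : ℕ} {L n m : ℕ} {S T : Finset ((Fin d → ℝ) → ℝ)} {f g : (Fin d → ℝ) → ℝ}

lemma mono (h : Lay L n S) (hnm : n ≤ m) : Lay L m S := by
  induction L generalizing S with
  | zero => exact h
  | succ L ih =>
    obtain ⟨T, h1, h2, h3⟩ := h
    exact ⟨T, ih h1, h2.trans hnm, h3⟩

lemma empty (L n : ℕ) : Lay L n (∅ : Finset ((Fin d → ℝ) → ℝ)) := by
  induction L with
  | zero => intro f hf; simp at hf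
  | succ L ih => exact ⟨∅, ih, by simp, by simp⟩

open Classical in
lemma union (h : Lay L n S) (h' : Lay L m T) : Lay L (n + m) (S ∪ T) := by
  induction L generalizing S T with
  | zero =>
    intro f hf
    rcases Finset.mem_union.1 hf with hf | hf
    · exact h f hf
    · exact h' f hf
  | succ L ih =>
    obtain ⟨A, h1, h2, h3⟩ := h
    obtain ⟨A', h1', h2', h3'⟩ := h'
    refine ⟨A ∪ A', ih h1 h1', (Finset.card_union_le _ _).trans (by omega), fun g hg => ?_⟩
    rcases Finset.mem_union.1 hg with hg | hg
    · obtain ⟨u, hu, e⟩ := h3 g hg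
      exact ⟨u, hu.subset Finset.subset_union_left, e⟩
    · obtain ⟨u, hu, e⟩ := h3' g hg
      exact ⟨u, hu.subset Finset.subset_union_right, e⟩

open Classical in
lemma biUnion {ι : Type*} (I : Finset ι) (S : ι → Finset ((Fin d → ℝ) → ℝ)) (n : ℕ)
    (h : ∀ i ∈ I, Lay L n (S i)) : Lay L (I.card * n) (I.biUnion S) := by
  induction I using Finset.induction_on with
  | empty => simpa using empty L 0
  | insert a I ha ih =>
    rw [Finset.biUnion_insert, Finset.card_insert_of_notMem ha]
    have := (h a (by simp)).union (ih fun i hi => h i (by simp [hi]))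
    exact this.mono (by ring_nf; omega)

lemma unit_nonneg (h : Lay (L + 1) n S) (hf : f ∈ S) (x : Fin d → ℝ) : 0 ≤ f x := by
  obtain ⟨T, -, -, h3⟩ := h
  obtain ⟨u, -, rfl⟩ := h3 f hf
  exact le_max_left _ _

lemma lift (h : Lay (L + 1) n S) : Lay (L + 2) n S := by
  refine ⟨S, h, ?_, fun g hg => ⟨g, LinC.unit hg, ?_⟩⟩
  · obtain ⟨T, -, h2, -⟩ := h; exact h2
  · funext x; exact (max_eq_right (h.unit_nonneg hg x)).symm

end Lay

namespace Fn
variable {d : ℕ} {L n m : ℕ} {P Q : ℝ} {f g : (Fin d → ℝ) → ℝ}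

lemma nonneg (h : Fn L n P f) : 0 ≤ P := by
  obtain ⟨S, -, h⟩ := h; exact h.nonneg

lemma mono (h : Fn L n P f) (hn : n ≤ m) (hP : P ≤ Q) : Fn L m Q f := by
  obtain ⟨S, h1, h2⟩ := h; exact ⟨S, h1.mono hn, h2.mono hP⟩

lemma const (L n : ℕ) (c : ℝ) : Fn L n |c| (fun _ : Fin d → ℝ => c) :=
  ⟨∅, Lay.empty L n, LinC.const c⟩

lemma add (h : Fn L n P f) (h' : Fn L m Q g) : Fn L (n + m) (P + Q) (fun x => f x + g x) := by
  classical
  obtain ⟨S, h1, h2⟩ := h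
  obtain ⟨T, h1', h2'⟩ := h'
  exact ⟨S ∪ T, h1.union h1',
    (h2.subset Finset.subset_union_left).add (h2'.subset Finset.subset_union_right)⟩

lemma smul (c : ℝ) (h : Fn L n P f) : Fn L n (|c| * P) (fun x => c * f x) := by
  obtain ⟨S, h1, h2⟩ := h; exact ⟨S, h1, h2.smul c⟩

lemma neg (h : Fn L n P f) : Fn L n P (fun x => -f x) := by
  have := h.smul (-1); simpa using this

lemma sub (h : Fn L n P f) (h' : Fn L m Q g) : Fn L (n + m) (P + Q) (fun x => f x - g x) := by
  simpa [sub_eq_add_neg] using h.add h'.neg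

lemma lift (h : Fn (L + 1) n P f) (j : ℕ) : Fn (L + 1 + j) n P f := by
  induction j with
  | zero => exact h
  | succ j ih =>
    obtain ⟨S, h1, h2⟩ := ih
    refine ⟨S, ?_, h2⟩
    have e : L + 1 + j = (L + j) + 1 := by omega
    have e' : L + 1 + (j + 1) = (L + j) + 2 := by omega
    rw [e] at h1; rw [e']
    exact h1.lift

lemma relu (h : Fn L n P f) : Fn (L + 1) (n + 1) P (fun x => max 0 (f x)) := by
  obtain ⟨S, h1, h2⟩ := h
  rcases h2.nonneg.eq_or_lt with hP | hP
  · subst hP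
    have hf : ∀ x, f x = 0 := by
      obtain ⟨a, b, e, hs⟩ := h2
      have hb : b = 0 := by
        have : 0 ≤ ∑ f ∈ S, |a f| := by positivity
        have := abs_nonneg b
        exact abs_eq_zero.1 (by linarith)
      have ha : ∀ f ∈ S, a f = 0 := by
        have h0 : ∑ f ∈ S, |a f| = 0 :=
          le_antisymm (by linarith [abs_nonneg b]) (by positivity)
        intro f hf
        exact abs_eq_zero.1 ((Finset.sum_eq_zero_iff_of_nonneg fun _ _ => abs_nonneg _).1 h0 f hf)
      intro x
      rw [e, hb, Finset.sum_eq_zero fun f hf => by rw [ha f hf, zero_mul]]; simp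
    have := const (d := d) (L + 1) (n + 1) 0
    simpa [hf] using this
  · refine ⟨{fun x => max 0 (P⁻¹ * f x)}, ⟨S, h1.mono (by omega), by simp, ?_⟩, ?_⟩
    · intro g hg
      rw [Finset.mem_singleton] at hg
      refine ⟨fun x => P⁻¹ * f x, ?_, hg⟩
      refine (h2.smul P⁻¹).mono ?_
      rw [abs_of_pos (inv_pos.2 hP), inv_mul_cancel₀ hP.ne']
    · have := (LinC.unit (Finset.mem_singleton_self (fun x => max 0 (P⁻¹ * f x)))).smul P
      rw [abs_of_pos hP, mul_one] at this
      convert this using 2 with x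
      rw [mul_max_of_nonneg _ _ hP.le, mul_zero, ← mul_assoc, mul_inv_cancel₀ hP.ne', one_mul]

lemma lift' (h : Fn L n P f) : Fn (L + 1) (2 * n + 2) (2 * P) f := by
  have := h.relu.sub h.neg.relu
  have e : (fun x => max 0 (f x) - max 0 (-f x)) = f := by
    funext x
    rcases le_total 0 (f x) with h | h
    · rw [max_eq_right h, max_eq_left (by linarith)]; ring
    · rw [max_eq_left h, max_eq_right (by linarith)]; ring
  rw [e] at this
  exact this.mono (by omega) (by linarith)

lemma coord (j : Fin d) : Fn 0 0 1 (fun x : Fin d → ℝ => x j) :=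
  ⟨{fun x => x j}, by intro f hf; exact ⟨j, by simpa using hf⟩, LinC.unit (by simp)⟩

end Fn

/-- the tent recursion -/
def vv : ℕ → ℝ → ℝ
  | 0, x => x
  | (s + 1), x => 1 - 2 * |vv s x|

/-- the approximate square -/
def qq (k : ℕ) (x : ℝ) : ℝ := ∑ s ∈ Finset.range k, (1 / 4 : ℝ) ^ s * (|vv s x| - 1 / 4)

lemma vv_abs_le (s : ℕ) {x : ℝ} (hx : |x| ≤ 1) : |vv s x| ≤ 1 := by
  induction s with
  | zero => exact hx
  | succ s ih =>
    have := abs_nonneg (vv s x)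
    rw [vv, abs_le]; constructor <;> linarith

lemma vv_even (s : ℕ) (x : ℝ) : |vv s (-x)| = |vv s x| := by
  induction s with
  | zero => simp [vv]
  | succ s ih => simp only [vv, ih]

lemma qq_even (k : ℕ) (x : ℝ) : qq k (-x) = qq k x := by simp only [qq, vv_even]

lemma qq_eq (k : ℕ) (x : ℝ) : x ^ 2 - qq k x = (1 / 4) ^ k * (vv k x) ^ 2 := by
  induction k with
  | zero => simp [qq, vv]
  | succ k ih =>
    have : qq (k + 1) x = qq k x + (1 / 4 : ℝ) ^ k * (|vv k x| - 1 / 4) := by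
      simp [qq, Finset.sum_range_succ]
    rw [this, vv, pow_succ]
    have h2 : (vv k x) ^ 2 = |vv k x| ^ 2 := (sq_abs _).symm
    rw [h2] at ih
    linear_combination ih

lemma qq_upper (k : ℕ) {x : ℝ} (hx : |x| ≤ 1) : qq k x ≤ 1 - (1 / 4) ^ k := by
  induction k with
  | zero => simp [qq]
  | succ k ih =>
    have : qq (k + 1) x = qq k x + (1 / 4 : ℝ) ^ k * (|vv k x| - 1 / 4) := by
      simp [qq, Finset.sum_range_succ]
    rw [this, pow_succ]
    have h := vv_abs_le k hx
    have : (1 / 4 : ℝ) ^ k * (|vv k x| - 1 / 4) ≤ (1 / 4 : ℝ) ^ k * (3 / 4) :=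
      mul_le_mul_of_nonneg_left (by linarith) (by positivity)
    linarith

lemma qq_err (k : ℕ) {x : ℝ} (hx : |x| ≤ 1) : 0 ≤ x ^ 2 - qq k x ∧ x ^ 2 - qq k x ≤ (1 / 4) ^ k := by
  rw [qq_eq]
  have h := vv_abs_le k hx
  have h2 : (vv k x) ^ 2 ≤ 1 := by rw [← sq_abs]; exact pow_le_one₀ (abs_nonneg _) h
  refine ⟨by positivity, ?_⟩
  have : (0 : ℝ) < (1 / 4) ^ k := by positivity
  nlinarith

/-- the approximate product -/
def mul' (k : ℕ) (a b : ℝ) : ℝ := qq k ((a + b) / 2) - qq k ((a - b) / 2)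

lemma mul'_zero (k : ℕ) (b : ℝ) : mul' k 0 b = 0 := by
  have : (0 - b) / 2 = -((0 + b) / 2) := by ring
  rw [mul', this, qq_even, sub_self]

lemma half_abs {a b : ℝ} (ha : |a| ≤ 1) (hb : |b| ≤ 1) :
    |(a + b) / 2| ≤ 1 ∧ |(a - b) / 2| ≤ 1 := by
  rw [abs_le] at *
  rw [abs_le]
  refine ⟨⟨?_, ?_⟩, ⟨?_, ?_⟩⟩ <;> linarith [ha.1, ha.2, hb.1, hb.2]

lemma mul'_err (k : ℕ) {a b : ℝ} (ha : |a| ≤ 1) (hb : |b| ≤ 1) :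
    |mul' k a b - a * b| ≤ (1 / 4) ^ k := by
  obtain ⟨h1, h2⟩ := half_abs ha hb
  have e1 := qq_err k h1
  have e2 := qq_err k h2
  have : a * b = ((a + b) / 2) ^ 2 - ((a - b) / 2) ^ 2 := by ring
  rw [mul', this, abs_le]
  constructor <;> linarith [e1.1, e1.2, e2.1, e2.2]

lemma mul'_abs (k : ℕ) {a b : ℝ} (ha : |a| ≤ 1) (hb : |b| ≤ 1) : |mul' k a b| ≤ 1 := by
  obtain ⟨h1, h2⟩ := half_abs ha hb
  have e1 := qq_err k h1
  have e2 := qq_err k h2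
  have u1 := qq_upper k h1
  have u2 := qq_upper k h2
  have := sq_nonneg ((a + b) / 2)
  have := sq_nonneg ((a - b) / 2)
  rw [mul', abs_le]
  constructor <;> linarith [e1.1, e1.2, e2.1, e2.2]

/-- norm of the `s`-th tent iterate -/
def pp (P : ℝ) (s : ℕ) : ℝ := 4 ^ s * (P + 1) - 1 / 3

lemma pp_pos {P : ℝ} (hP : 0 ≤ P) (s : ℕ) : 0 < pp P s := by
  have : (1 : ℝ) ≤ 4 ^ s := one_le_pow₀ (by norm_num)
  unfold pp; nlinarith

lemma pp_succ (P : ℝ) (s : ℕ) : pp P (s + 1) = 1 + 4 * pp P s := by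
  unfold pp; rw [pow_succ]; ring

/-- unit functions used for the square -/
def uu {d : ℕ} (P : ℝ) (f : (Fin d → ℝ) → ℝ) (σ : ℝ) (s : ℕ) : (Fin d → ℝ) → ℝ :=
  fun x => max 0 (σ * ((pp P s)⁻¹ * vv s (f x)))

open Classical in
/-- family of units used for the square -/
def UU {d : ℕ} (P : ℝ) (f : (Fin d → ℝ) → ℝ) (s : ℕ) : Finset ((Fin d → ℝ) → ℝ) :=
  (Finset.range s).image (uu P f 1) ∪ (Finset.range s).image (uu P f (-1))

lemma UU_card {d : ℕ} (P : ℝ) (f : (Fin d → ℝ) → ℝ) (s : ℕ) : (UU P f s).card ≤ 2 * s := by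
  classical
  unfold UU
  refine (Finset.card_union_le _ _).trans ?_
  have h1 := Finset.card_image_le (s := Finset.range s) (f := uu P f 1)
  have h2 := Finset.card_image_le (s := Finset.range s) (f := uu P f (-1))
  rw [Finset.card_range] at h1 h2
  omega

lemma uu_mem {d : ℕ} (P : ℝ) (f : (Fin d → ℝ) → ℝ) {s t : ℕ} (h : t < s) :
    uu P f 1 t ∈ UU P f s ∧ uu P f (-1) t ∈ UU P f s := by
  classical
  unfold UU
  constructor
  · exact Finset.mem_union_left _ (Finset.mem_image_of_mem _ (by simpa using h))
  · exact Finset.mem_union_right _ (Finset.mem_image_of_mem _ (by simpa using h))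

lemma UU_abs {d : ℕ} {P : ℝ} (hP : 0 ≤ P) (f : (Fin d → ℝ) → ℝ) {s t : ℕ} (h : t < s) :
    LinC (2 * pp P t) (UU P f s) (fun x => |vv t (f x)|) := by
  obtain ⟨h1, h2⟩ := uu_mem P f h
  have hp := pp_pos hP t
  have := ((LinC.unit h1).smul (pp P t)).add ((LinC.unit h2).smul (pp P t))
  rw [abs_of_pos hp] at this
  have this := this.mono (Q := 2 * pp P t) (by linarith)
  convert this using 2 with x
  have e : vv t (f x) = pp P t * ((pp P t)⁻¹ * vv t (f x)) := by
    rw [← mul_assoc, mul_inv_cancel₀ hp.ne', one_mul]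
  conv_lhs => rw [e]
  rw [abs_mul, abs_of_pos hp, ← mul_add]
  congr 1
  unfold uu
  generalize (pp P t)⁻¹ * vv t (f x) = y
  rcases le_total 0 y with h | h
  · rw [abs_of_nonneg h, max_eq_right (by linarith), max_eq_left (by linarith)]; ring
  · rw [abs_of_nonpos h, max_eq_left (by linarith), max_eq_right (by linarith)]; ring

lemma UU_lay {d : ℕ} {L n : ℕ} {P : ℝ} {f : (Fin d → ℝ) → ℝ} (h : Fn L n P f) (s : ℕ) :
    Lay (L + (s + 1)) (n + 2 * (s + 1)) (UU P f (s + 1)) := by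
  classical
  have hP := h.nonneg
  induction s with
  | zero =>
    obtain ⟨S, h1, h2⟩ := h
    refine ⟨S, h1.mono (by omega), (UU_card P f 1).trans (by omega), ?_⟩
    have key : ∀ σ : ℝ, |σ| = 1 → LinC 1 S (fun x => σ * ((pp P 0)⁻¹ * vv 0 (f x))) := by
      intro σ hσ
      refine ((h2.smul (pp P 0)⁻¹).smul σ).mono ?_
      have hp := pp_pos hP 0
      rw [hσ, one_mul, abs_of_pos (inv_pos.2 hp), inv_mul_le_iff₀ hp]
      unfold pp; norm_num; linarith
    intro g hg
    simp only [UU, Finset.mem_union, Finset.mem_image, Finset.mem_range] at hg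
    rcases hg with ⟨t, ht, rfl⟩ | ⟨t, ht, rfl⟩
    · obtain rfl : t = 0 := by omega
      exact ⟨_, key 1 (by simp), rfl⟩
    · obtain rfl : t = 0 := by omega
      exact ⟨_, key (-1) (by simp), rfl⟩
  | succ s ih =>
    refine ⟨UU P f (s + 1), ih.mono (by omega), (UU_card P f _).trans (by omega), ?_⟩
    have key : ∀ σ : ℝ, |σ| = 1 → LinC 1 (UU P f (s + 1))
        (fun x => σ * ((pp P (s + 1))⁻¹ * vv (s + 1) (f x))) := by
      intro σ hσ
      have hl : LinC (pp P (s + 1)) (UU P f (s + 1)) (fun x => vv (s + 1) (f x)) := by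
        have := (LinC.const (S := UU P f (s + 1)) 1).add
          ((UU_abs hP f (Nat.lt_succ_self s)).smul (-2))
        have hle : |(1 : ℝ)| + |(-2 : ℝ)| * (2 * pp P s) ≤ pp P (s + 1) := by
          rw [pp_succ, abs_neg, abs_one, abs_two]; linarith
        convert this.mono hle using 2 with x
        simp only [vv]; ring
      refine ((hl.smul (pp P (s + 1))⁻¹).smul σ).mono ?_
      have hp := pp_pos hP (s + 1)
      rw [hσ, one_mul, abs_of_pos (inv_pos.2 hp), inv_mul_cancel₀ hp.ne']
    have pass : ∀ g ∈ UU P f (s + 1), ∃ h, LinC 1 (UU P f (s + 1)) h ∧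
        g = fun x => max 0 (h x) := by
      intro g hg
      refine ⟨g, LinC.unit hg, ?_⟩
      funext x; exact (max_eq_right (Lay.unit_nonneg ih hg x)).symm
    intro g hg
    simp only [UU, Finset.mem_union, Finset.mem_image, Finset.mem_range] at hg
    rcases hg with ⟨t, ht, rfl⟩ | ⟨t, ht, rfl⟩
    · rcases Nat.lt_succ_iff_lt_or_eq.1 ht with ht | rfl
      · exact pass _ (uu_mem P f ht).1
      · exact ⟨_, key 1 (by simp), rfl⟩
    · rcases Nat.lt_succ_iff_lt_or_eq.1 ht with ht | rfl
      · exact pass _ (uu_mem P f ht).2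
      · exact ⟨_, key (-1) (by simp), rfl⟩

lemma Fn.sq {d : ℕ} {L n : ℕ} {P : ℝ} {f : (Fin d → ℝ) → ℝ} (h : Fn L n P f) (k : ℕ)
    (hk : 1 ≤ k) : Fn (L + k) (n + 2 * k) (3 * k * (P + 1)) (fun x => qq k (f x)) := by
  have hP := h.nonneg
  obtain ⟨s, rfl⟩ : ∃ s, k = s + 1 := ⟨k - 1, by omega⟩
  refine ⟨UU P f (s + 1), UU_lay h s, ?_⟩
  have := LinC.sum (S := UU P f (s + 1)) (Finset.range (s + 1))
    (fun t => |(1 / 4 : ℝ) ^ t| * (2 * pp P t + |(-(1 / 4) : ℝ)|))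
    (fun t x => (1 / 4 : ℝ) ^ t * (|vv t (f x)| + -(1 / 4))) (fun t ht =>
      ((UU_abs hP f (Finset.mem_range.1 ht)).add (LinC.const _)).smul _)
  refine LinC.mono (P := ∑ t ∈ Finset.range (s + 1),
    |(1 / 4 : ℝ) ^ t| * (2 * pp P t + |(-(1 / 4) : ℝ)|)) ?_ ?_
  · exact this
  · calc _ ≤ ∑ t ∈ Finset.range (s + 1), 3 * (P + 1) := by
          refine Finset.sum_le_sum fun t _ => ?_
          have h4 : (0 : ℝ) < (1 / 4) ^ t := by positivity
          rw [abs_of_pos h4, abs_neg, abs_of_pos (by norm_num : (0 : ℝ) < 1 / 4)]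
          have e : (1 / 4 : ℝ) ^ t * 4 ^ t = 1 := by rw [← mul_pow]; norm_num
          unfold pp
          have : (1 / 4 : ℝ) ^ t ≤ 1 := pow_le_one₀ (by norm_num) (by norm_num)
          have : (1 / 4 : ℝ) ^ t * (2 * (4 ^ t * (P + 1) - 1 / 3) + 1 / 4)
            = 2 * ((1 / 4 : ℝ) ^ t * 4 ^ t) * (P + 1) - (5 / 12) * (1 / 4) ^ t := by ring
          rw [this, e]; linarith
      _ = _ := by rw [Finset.sum_const, Finset.card_range, nsmul_eq_mul]; ring

lemma Fn.mul' {d : ℕ} {L n m : ℕ} {P Q : ℝ} {f g : (Fin d → ℝ) → ℝ} (h : Fn L n P f)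
    (h' : Fn L m Q g) (k : ℕ) (hk : 1 ≤ k) :
    Fn (L + k) (2 * (n + m + 2 * k)) (3 * k * (P + Q + 2)) (fun x => mul' k (f x) (g x)) := by
  have h1 := ((h.add h').smul (1 / 2)).sq k hk
  have h2 := ((h.sub h').smul (1 / 2)).sq k hk
  have := (h1.sub h2).mono (m := 2 * (n + m + 2 * k)) (Q := 3 * k * (P + Q + 2)) (by omega)
    (by rw [abs_of_pos (by norm_num)]; apply le_of_eq; ring)
  convert this using 2 with x
  unfold _root_.mul'
  congr 2 <;> ring

/-- zero padding of the input -/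
def padx {d : ℕ} (x : Fin d → ℝ) : ℕ → ℝ := fun j => if h : j < d then x ⟨j, h⟩ else 0

lemma row_exists {d : ℕ} {P : ℝ} {S : Finset ((Fin d → ℝ) → ℝ)} {g : (Fin d → ℝ) → ℝ}
    (h : LinC P S g) (m : ℕ) (z : (Fin d → ℝ) → ℕ → ℝ)
    (hz : ∀ f ∈ S, ∃ j < m, ∀ x, z x j = f x) :
    ∃ (row : ℕ → ℝ) (b : ℝ), (∀ x, g x = (∑ j ∈ Finset.range m, row j * z x j) + b) ∧
      (∑ j ∈ Finset.range m, |row j|) + |b| ≤ P := by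
  classical
  obtain ⟨a, b, h1, h2⟩ := h
  choose! idx hidx hval using hz
  have hmaps : ∀ f ∈ S, idx f ∈ Finset.range m := fun f hf => Finset.mem_range.2 (hidx f hf)
  refine ⟨fun j => ∑ f ∈ S with idx f = j, a f, b, fun x => ?_, ?_⟩
  · rw [h1 x]
    congr 1
    rw [← Finset.sum_fiberwise_of_maps_to hmaps]
    refine Finset.sum_congr rfl fun j _ => ?_
    rw [Finset.sum_mul]
    refine Finset.sum_congr rfl fun f hf => ?_
    rw [Finset.mem_filter] at hf
    rw [← hf.2, hval f hf.1]
  · refine le_trans ?_ h2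
    gcongr
    rw [← Finset.sum_fiberwise_of_maps_to hmaps]
    exact Finset.sum_le_sum fun j _ => Finset.abs_sum_le_sum_abs _ _

lemma hiddenLayers_congr {W W' : ℕ → ℕ → ℕ → ℝ} {b b' : ℕ → ℕ → ℝ} {w w' : ℕ → ℕ} (L : ℕ)
    (h : ∀ l < L, W l = W' l ∧ b l = b' l ∧ w l = w' l) (x : ℕ → ℝ) :
    hiddenLayers W b w L x = hiddenLayers W' b' w' L x := by
  induction L with
  | zero => rfl
  | succ L ih =>
    obtain ⟨h1, h2, h3⟩ := h L (by omega)
    simp only [hiddenLayers, h1, h2, h3, ih fun l hl => h l (by omega)]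

lemma Lay.toNet {d L n : ℕ} {S : Finset ((Fin d → ℝ) → ℝ)} (h : Lay L n S) :
    ∃ (w : ℕ → ℕ) (W : ℕ → ℕ → ℕ → ℝ) (b : ℕ → ℕ → ℝ), w 0 = d ∧
      (∀ l, 1 ≤ l → l ≤ L → w l ≤ n) ∧
      (∀ l < L, ∀ i < w (l + 1), (∑ j ∈ Finset.range (w l), |W l i j|) + |b l i| ≤ 1) ∧
      ∀ f ∈ S, ∃ j < w L, ∀ x, hiddenLayers W b w L (padx x) j = f x := by
  classical
  induction L generalizing S with
  | zero =>
    refine ⟨fun _ => d, fun _ _ _ => 0, fun _ _ => 0, rfl, by intros; omega, by intros; omega, ?_⟩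
    intro f hf
    obtain ⟨j, rfl⟩ := h f hf
    exact ⟨j, j.2, fun x => by simp [hiddenLayers, padx]⟩
  | succ L ih =>
    obtain ⟨T, hT, hcard, hS⟩ := h
    obtain ⟨w, W, b, h0, h1, h2, h3⟩ := ih hT
    choose! pre hpre hpre' using hS
    have hrow := fun g (hg : g ∈ S) => row_exists (hpre g hg) (w L)
      (fun x => hiddenLayers W b w L (padx x)) h3
    choose! row bb hrow1 hrow2 using hrow
    let e := S.equivFin
    let E : ℕ → ((Fin d → ℝ) → ℝ) := fun i => if hi : i < S.card then e.symm ⟨i, hi⟩ else fun _ => 0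
    have hE : ∀ i < S.card, E i ∈ S := fun i hi => by
      simp only [E, hi, dif_pos]; exact Subtype.property _
    let w' := Function.update w (L + 1) S.card
    let W' := Function.update W L (fun i => row (E i))
    let b' := Function.update b L (fun i => bb (E i))
    have hw' : ∀ l ≤ L, w' l = w l := fun l hl => by
      simp only [w']; rw [Function.update_of_ne (by omega)]
    have hcong : ∀ x, hiddenLayers W' b' w' L x = hiddenLayers W b w L x := fun x =>
      hiddenLayers_congr L (fun l hl => ⟨by simp only [W']; rw [Function.update_of_ne (by omega)],
        by simp only [b']; rw [Function.update_of_ne (by omega)], hw' l hl.le⟩) x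
    refine ⟨w', W', b', by rw [hw' 0 (by omega), h0], ?_, ?_, ?_⟩
    · intro l hl hl'
      rcases Nat.le_succ_iff.1 hl' with h | rfl
      · rw [hw' l h]; exact h1 l hl h
      · simpa [w'] using hcard
    · intro l hl i hi
      rcases Nat.lt_succ_iff_lt_or_eq.1 hl with h | rfl
      · rw [hw' _ (by omega)] at hi
        rw [hw' l h.le]
        simp only [W', b']
        rw [Function.update_of_ne (by omega), Function.update_of_ne (by omega)]
        exact h2 l h i hi
      · rw [hw' l le_rfl]
        have hi' : i < S.card := by simpa [w'] using hi
        simp only [W', b', Function.update_self]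
        exact hrow2 _ (hE i hi')
    · intro g hg
      refine ⟨e ⟨g, hg⟩, by simp [w'], fun x => ?_⟩
      have hEg : E (e ⟨g, hg⟩) = g := by simp [E]
      simp only [hiddenLayers, hcong]
      simp only [W', b', Function.update_self, hEg]
      rw [hw' L le_rfl, ← hrow1 g hg x]
      exact (congrFun (hpre' g hg) x).symm

lemma Lay.memNN {d K L n : ℕ} {P : ℝ} (hP : 0 ≤ P) {S : Finset ((Fin d → ℝ) → ℝ)}
    (h : Lay L n S) (φ : (Fin d → ℝ) → Fin K → ℝ) (hφ : ∀ i, LinC P S (fun x => φ x i))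
    (D : ℕ) (hD : L ≤ D) : MemNNClass d K n D P φ := by
  classical
  obtain ⟨w, W, b, h0, h1, h2, h3⟩ := h.toNet
  have hrow := fun i => row_exists (hφ i) (w L) (fun x => hiddenLayers W b w L (padx x)) h3
  choose row bb hrow1 hrow2 using hrow
  let w' := Function.update w (L + 1) K
  let W' := Function.update W L (fun i => if hi : i < K then row ⟨i, hi⟩ else fun _ => 0)
  let b' := Function.update b L (fun i => if hi : i < K then bb ⟨i, hi⟩ else 0)
  have hw' : ∀ l ≤ L, w' l = w l := fun l hl => by
    simp only [w']; rw [Function.update_of_ne (by omega)]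
  have hcong : ∀ x, hiddenLayers W' b' w' L x = hiddenLayers W b w L x := fun x =>
    hiddenLayers_congr L (fun l hl => ⟨by simp only [W']; rw [Function.update_of_ne (by omega)],
      by simp only [b']; rw [Function.update_of_ne (by omega)], hw' l hl.le⟩) x
  refine ⟨L, hD, w', W', b', fun l => if l = L then P else 1, by rw [hw' 0 (by omega), h0],
    by simp [w'], ?_, ?_, ?_, ?_, ?_⟩
  · intro l hl hl'
    rw [hw' l hl']; exact h1 l hl hl'
  · intro l hl i hi
    rcases hl.lt_or_eq with h | rfl
    · rw [hw' _ (by omega)] at hi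
      rw [hw' l h.le]
      simp only [W', b']
      rw [Function.update_of_ne (by omega), Function.update_of_ne (by omega), if_neg (by omega)]
      exact h2 l h i hi
    · rw [hw' l le_rfl]
      have hi' : i < K := by simpa [w'] using hi
      simp only [W', b', Function.update_self, hi', dif_pos, if_true]
      exact hrow2 _
  · intro l; dsimp only; split_ifs <;> simp [hP]
  · rw [Finset.prod_eq_one]
    · simp
    · intro l hl
      have : l ≠ L := (Finset.mem_range.1 hl).ne
      simp [this]
  · intro x i
    have : (fun j => if h : j < d then x ⟨j, h⟩ else 0) = padx x := rfl
    rw [this, hcong]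
    simp only [W', b', Function.update_self, i.2, dif_pos]
    rw [hw' L le_rfl, ← hrow1 i x]

/-- rescaled coordinate around a grid point -/
def tt {d : ℕ} (N : ℕ) (p : Fin d → ℕ) (j : Fin d) (x : Fin d → ℝ) : ℝ := N * x j - p j

/-- rescaled coordinate, indexed by naturals -/
def tn {d : ℕ} (N : ℕ) (p : Fin d → ℕ) (σ : ℝ) (j : ℕ) (x : Fin d → ℝ) : ℝ :=
  if h : j < d then σ * tt N p ⟨j, h⟩ x else 0

/-- running maximum of zero and `t 0, …, t (m-1)` -/
def AA {d : ℕ} (t : ℕ → (Fin d → ℝ) → ℝ) : ℕ → (Fin d → ℝ) → ℝ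
  | 0, _ => 0
  | (m + 1), x => AA t m x + max 0 (t m x - AA t m x)

lemma AA_le_iff {d : ℕ} (t : ℕ → (Fin d → ℝ) → ℝ) (m : ℕ) (x : Fin d → ℝ) (y : ℝ) :
    AA t m x ≤ y ↔ 0 ≤ y ∧ ∀ j < m, t j x ≤ y := by
  induction m with
  | zero => simp [AA]
  | succ m ih =>
    have e : AA t (m + 1) x = max (AA t m x) (t m x) := by
      rw [AA]
      rcases le_total (AA t m x) (t m x) with h | h
      · rw [max_eq_right h, max_eq_right (by linarith)]; ring
      · rw [max_eq_left h, max_eq_left (by linarith)]; ring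
    rw [e, max_le_iff, ih]
    constructor
    · rintro ⟨⟨h1, h2⟩, h3⟩
      refine ⟨h1, fun j hj => ?_⟩
      rcases Nat.lt_succ_iff_lt_or_eq.1 hj with h | rfl
      · exact h2 j h
      · exact h3
    · rintro ⟨h1, h2⟩
      exact ⟨⟨h1, fun j hj => h2 j (by omega)⟩, h2 m (by omega)⟩

/-- positive part maximum -/
def Ap {d : ℕ} (N : ℕ) (p : Fin d → ℕ) (x : Fin d → ℝ) : ℝ := AA (tn N p 1) d x

/-- negative part maximum -/
def An {d : ℕ} (N : ℕ) (p : Fin d → ℕ) (x : Fin d → ℝ) : ℝ := AA (tn N p (-1)) d x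

/-- nodal function of the Kuhn triangulation -/
def psi {d : ℕ} (N : ℕ) (p : Fin d → ℕ) (x : Fin d → ℝ) : ℝ :=
  max 0 (1 - (Ap N p x + An N p x))

lemma Ap_le_iff {d : ℕ} (N : ℕ) (p : Fin d → ℕ) (x : Fin d → ℝ) (y : ℝ) :
    Ap N p x ≤ y ↔ 0 ≤ y ∧ ∀ j, tt N p j x ≤ y := by
  rw [Ap, AA_le_iff]
  refine and_congr_right fun _ => ⟨fun h j => ?_, fun h j hj => ?_⟩
  · simpa [tn] using h j j.2
  · simpa [tn, hj] using h ⟨j, hj⟩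

lemma An_le_iff {d : ℕ} (N : ℕ) (p : Fin d → ℕ) (x : Fin d → ℝ) (y : ℝ) :
    An N p x ≤ y ↔ 0 ≤ y ∧ ∀ j, -tt N p j x ≤ y := by
  rw [An, AA_le_iff]
  refine and_congr_right fun _ => ⟨fun h j => ?_, fun h j hj => ?_⟩
  · simpa [tn] using h j j.2
  · simpa [tn, hj] using h ⟨j, hj⟩

lemma Ap_nonneg {d : ℕ} (N : ℕ) (p : Fin d → ℕ) (x : Fin d → ℝ) : 0 ≤ Ap N p x :=
  ((Ap_le_iff N p x _).1 le_rfl).1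

lemma An_nonneg {d : ℕ} (N : ℕ) (p : Fin d → ℕ) (x : Fin d → ℝ) : 0 ≤ An N p x :=
  ((An_le_iff N p x _).1 le_rfl).1

lemma psi_nonneg {d : ℕ} (N : ℕ) (p : Fin d → ℕ) (x : Fin d → ℝ) : 0 ≤ psi N p x :=
  le_max_left _ _

lemma psi_le_one {d : ℕ} (N : ℕ) (p : Fin d → ℕ) (x : Fin d → ℝ) : psi N p x ≤ 1 := by
  have := Ap_nonneg N p x
  have := An_nonneg N p x
  exact max_le zero_le_one (by linarith)

lemma psi_support {d : ℕ} (N : ℕ) (p : Fin d → ℕ) (x : Fin d → ℝ) (h : psi N p x ≠ 0) (j : Fin d) :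
    |tt N p j x| < 1 := by
  have hp : 0 < 1 - (Ap N p x + An N p x) := by
    by_contra hc
    exact h (max_eq_left (not_lt.1 hc))
  have h1 := Ap_nonneg N p x
  have h2 := An_nonneg N p x
  have h3 := ((Ap_le_iff N p x _).1 le_rfl).2 j
  have h4 := ((An_le_iff N p x _).1 le_rfl).2 j
  rw [abs_lt]; constructor <;> linarith

/-- the cell of shifts attached to a grid point -/
lemma cell_mem {d : ℕ} (N : ℕ) (p : Fin d → ℕ) (x : Fin d → ℝ) (s : ℝ) :
    s ∈ Set.Ico (An N p x) (1 - Ap N p x) ↔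
      (0 ≤ s ∧ s < 1) ∧ ∀ j, (p j : ℝ) ≤ N * x j + s ∧ N * x j + s < p j + 1 := by
  have hlt : s < 1 - Ap N p x ↔ s < 1 ∧ ∀ j, N * x j + s < p j + 1 := by
    constructor
    · intro h
      have h1 := Ap_nonneg N p x
      refine ⟨by linarith, fun j => ?_⟩
      have h3 := ((Ap_le_iff N p x _).1 le_rfl).2 j
      unfold tt at h3; linarith
    · rintro ⟨h1, h2⟩
      by_contra hc
      -- use a slightly smaller bound
      have : ∃ y, Ap N p x ≤ y ∧ y < 1 - s := by
        by_cases hd : Nonempty (Fin d)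
        · obtain ⟨j0, hj0⟩ := Finite.exists_max (fun j => tt N p j x)
          refine ⟨max 0 (tt N p j0 x), (Ap_le_iff N p x _).2
            ⟨le_max_left _ _, fun j => (hj0 j).trans (le_max_right _ _)⟩, ?_⟩
          refine max_lt (by linarith) ?_
          have := h2 j0
          unfold tt; linarith
        · exact ⟨0, (Ap_le_iff N p x _).2 ⟨le_rfl, fun j => (hd ⟨j⟩).elim⟩, by linarith⟩
      obtain ⟨y, hy1, hy2⟩ := this
      exact hc (by linarith)
  rw [Set.mem_Ico, hlt, An_le_iff]
  constructor
  · rintro ⟨⟨h1, h2⟩, h3, h4⟩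
    refine ⟨⟨h1, h3⟩, fun j => ⟨?_, h4 j⟩⟩
    have := h2 j; unfold tt at this; linarith
  · rintro ⟨⟨h1, h2⟩, h3⟩
    refine ⟨⟨h1, fun j => ?_⟩, h2, fun j => (h3 j).2⟩
    have := (h3 j).1; unfold tt; linarith

lemma psi_eq {d : ℕ} (N : ℕ) (p : Fin d → ℕ) (x : Fin d → ℝ) :
    psi N p x = MeasureTheory.volume.real (Set.Ico (An N p x) (1 - Ap N p x)) := by
  rw [MeasureTheory.measureReal_def, Real.volume_Ico, ENNReal.toReal_ofReal', psi, max_comm]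
  congr 1; ring

/-- coercion of grid points -/
def gp {d N : ℕ} (p : Fin d → Fin (N + 1)) : Fin d → ℕ := fun j => p j

lemma psi_sum {d : ℕ} (N : ℕ) (x : Fin d → ℝ) (hx : x ∈ Set.Icc (0 : Fin d → ℝ) 1) :
    ∑ p : Fin d → Fin (N + 1), psi N (gp p) x = 1 := by
  simp only [psi_eq]
  have hfin : ∀ p ∈ (Finset.univ : Finset (Fin d → Fin (N + 1))),
      MeasureTheory.volume (Set.Ico (An N (gp p) x) (1 - Ap N (gp p) x)) ≠ ⊤ := by
    intro p _; rw [Real.volume_Ico]; exact ENNReal.ofReal_ne_top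
  rw [← MeasureTheory.measureReal_biUnion_finset (h := hfin)]
  · have : (⋃ p ∈ (Finset.univ : Finset (Fin d → Fin (N + 1))),
        Set.Ico (An N (gp p) x) (1 - Ap N (gp p) x)) = Set.Ico (0 : ℝ) 1 := by
      ext s
      simp only [Set.mem_iUnion, cell_mem, Finset.mem_univ, exists_prop, true_and]
      constructor
      · rintro ⟨p, h, -⟩; exact h
      · intro h
        have hnn : ∀ j, 0 ≤ N * x j + s := fun j => by
          have h0 := hx.1 j
          have : (0 : ℝ) ≤ N * x j := mul_nonneg (Nat.cast_nonneg _) h0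
          linarith [h.1]
        have hlt : ∀ j, ⌊N * x j + s⌋₊ < N + 1 := fun j => by
          rw [Nat.floor_lt (hnn j)]
          have h1 : x j ≤ 1 := hx.2 j
          have : N * x j ≤ N * 1 := mul_le_mul_of_nonneg_left h1 (Nat.cast_nonneg _)
          push_cast; linarith [h.2]
        refine ⟨fun j => ⟨⌊N * x j + s⌋₊, hlt j⟩, h, fun j => ⟨?_, ?_⟩⟩
        · exact Nat.floor_le (hnn j)
        · exact Nat.lt_floor_add_one _
    rw [this, MeasureTheory.measureReal_def, Real.volume_Ico]; simp
  · intro p _ q _ hpq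
    rw [Function.onFun, Set.disjoint_left]
    intro s hs hs'
    rw [cell_mem] at hs hs'
    apply hpq
    funext j
    have h1 := hs.2 j
    have h2 := hs'.2 j
    have a1 : (gp p j : ℝ) < (gp q j : ℝ) + 1 := by linarith
    have a2 : (gp q j : ℝ) < (gp p j : ℝ) + 1 := by linarith
    have b1 : gp p j < gp q j + 1 := by exact_mod_cast a1
    have b2 : gp q j < gp p j + 1 := by exact_mod_cast a2
    apply Fin.ext
    unfold gp at b1 b2
    omega
  · intro p _; exact measurableSet_Ico

lemma psi_count {d : ℕ} (N : ℕ) (x : Fin d → ℝ) :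
    (Finset.univ.filter fun p : Fin d → Fin (N + 1) => psi N (gp p) x ≠ 0).card ≤ 2 ^ d := by
  classical
  have hsub : (Finset.univ.filter fun p : Fin d → Fin (N + 1) => psi N (gp p) x ≠ 0) ⊆
      Fintype.piFinset fun j => Finset.univ.filter fun q : Fin (N + 1) => |(N : ℝ) * x j - (q : ℕ)| < 1 := by
    intro p hp
    rw [Fintype.mem_piFinset]
    intro j
    simp only [Finset.mem_filter, Finset.mem_univ, true_and] at hp ⊢
    exact psi_support N (gp p) x hp j
  refine (Finset.card_le_card hsub).trans ?_
  rw [Fintype.card_piFinset]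
  refine (Finset.prod_le_prod' (g := fun _ => 2) fun j _ => ?_).trans (by simp)
  have himg : (Finset.univ.filter fun q : Fin (N + 1) => |(N : ℝ) * x j - (q : ℕ)| < 1).image
      (fun q : Fin (N + 1) => ((q : ℕ) : ℤ)) ⊆ {⌊(N : ℝ) * x j⌋, ⌊(N : ℝ) * x j⌋ + 1} := by
    intro z hz
    simp only [Finset.mem_image, Finset.mem_filter, Finset.mem_univ, true_and] at hz
    obtain ⟨q, hq, rfl⟩ := hz
    rw [abs_lt] at hq
    have h1 := Int.floor_le ((N : ℝ) * x j)
    have h2 := Int.lt_floor_add_one ((N : ℝ) * x j)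
    have a1 : (((q : ℕ) : ℤ) : ℝ) < ((⌊(N : ℝ) * x j⌋ + 2 : ℤ) : ℝ) := by push_cast; linarith
    have a2 : ((⌊(N : ℝ) * x j⌋ - 1 : ℤ) : ℝ) < (((q : ℕ) : ℤ) : ℝ) := by push_cast; linarith
    have b1 := Int.cast_lt.1 a1
    have b2 := Int.cast_lt.1 a2
    simp only [Finset.mem_insert, Finset.mem_singleton]
    omega
  have hinj : Function.Injective (fun q : Fin (N + 1) => ((q : ℕ) : ℤ)) := by
    intro a b h
    apply Fin.ext
    simpa using h
  rw [← Finset.card_image_of_injective _ hinj]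
  exact (Finset.card_le_card himg).trans Finset.card_le_two

/-- approximate product of `psi` with the rescaled coordinates in a list -/
def feat {d : ℕ} (k N : ℕ) (p : Fin d → ℕ) : List (Fin d) → (Fin d → ℝ) → ℝ
  | [], x => psi N p x
  | j :: l, x => mul' k (feat k N p l x) (tt N p j x)

lemma feat_zero {d : ℕ} (k N : ℕ) (p : Fin d → ℕ) (l : List (Fin d)) (x : Fin d → ℝ)
    (h : psi N p x = 0) : feat k N p l x = 0 := by
  induction l with
  | nil => exact h
  | cons j l ih => rw [feat, ih, mul'_zero]

lemma feat_err {d : ℕ} (k N : ℕ) (p : Fin d → ℕ) (l : List (Fin d)) (x : Fin d → ℝ)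
    (h : psi N p x ≠ 0) : |feat k N p l x| ≤ 1 ∧
      |feat k N p l x - psi N p x * (l.map fun j => tt N p j x).prod| ≤ l.length * (1 / 4) ^ k := by
  induction l with
  | nil =>
    simp only [feat, List.map_nil, List.prod_nil, mul_one, sub_self, abs_zero]
    refine ⟨abs_le.2 ⟨?_, psi_le_one N p x⟩, by positivity⟩
    linarith [psi_nonneg N p x]
  | cons j l ih =>
    obtain ⟨h1, h2⟩ := ih
    have ht := (psi_support N p x h j).le
    rw [feat]
    refine ⟨mul'_abs k h1 ht, ?_⟩
    simp only [List.map_cons, List.prod_cons, List.length_cons]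
    have e := mul'_err k h1 ht
    set a := feat k N p l x
    set t := tt N p j x
    set Pr := (l.map fun j => tt N p j x).prod
    have e2 : |(a - psi N p x * Pr) * t| ≤ l.length * (1 / 4) ^ k := by
      rw [abs_mul]
      exact (mul_le_of_le_one_right (abs_nonneg _) ht).trans h2
    calc |mul' k a t - psi N p x * (t * Pr)|
        = |(mul' k a t - a * t) + (a - psi N p x * Pr) * t| := by congr 1; ring
      _ ≤ _ := abs_add_le _ _
      _ ≤ _ := add_le_add e e2
      _ = _ := by push_cast; ring

lemma tt_fn {d : ℕ} (N : ℕ) (hN : 1 ≤ N) (p : Fin d → ℕ) (hp : ∀ j, p j ≤ N) (j : Fin d) (L : ℕ) :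
    Fn L 2 (4 * N) (tt N p j) := by
  have hN' : (1 : ℝ) ≤ N := by exact_mod_cast hN
  have h0 : Fn 0 0 (2 * N) (tt N p j) := by
    have := ((Fn.coord j).smul (N : ℝ)).sub (Fn.const 0 0 (p j : ℝ))
    refine this.mono (by omega) ?_
    have : (p j : ℝ) ≤ N := by exact_mod_cast hp j
    rw [Nat.abs_cast, Nat.abs_cast]; linarith
  cases L with
  | zero => exact h0.mono (by omega) (by linarith)
  | succ L =>
    have := (h0.lift').lift L
    rw [show 0 + 1 + L = L + 1 by omega] at this
    exact this.mono (by omega) (by linarith)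

lemma tn_fn {d : ℕ} (N : ℕ) (hN : 1 ≤ N) (p : Fin d → ℕ) (hp : ∀ j, p j ≤ N) (σ : ℝ)
    (hσ : |σ| = 1) (j : ℕ) (L : ℕ) : Fn L 2 (4 * N) (tn N p σ j) := by
  by_cases h : j < d
  · have := (tt_fn N hN p hp ⟨j, h⟩ L).smul σ
    rw [hσ, one_mul] at this
    convert this using 2 with x
    simp [tn, h]
  · have := (Fn.const (d := d) L 2 0).mono (Q := 4 * N) le_rfl (by rw [abs_zero]; positivity)
    convert this using 2 with x
    simp [tn, h]

lemma AA_fn {d : ℕ} (m : ℕ) : ∃ c : ℕ, ∀ (N : ℕ) (t : ℕ → (Fin d → ℝ) → ℝ),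
    (∀ j L, Fn L 2 (4 * N) (t j)) → Fn m c (c * N) (AA t m) := by
  induction m with
  | zero =>
    refine ⟨0, fun N t _ => ?_⟩
    simpa [AA] using Fn.const (d := d) 0 0 0
  | succ m ih =>
    obtain ⟨c, hc⟩ := ih
    refine ⟨3 * c + 5, fun N t ht => ?_⟩
    have h := hc N t ht
    have := h.lift'.add ((ht m m).sub h).relu
    refine this.mono (by omega) ?_
    push_cast
    have : (0 : ℝ) ≤ N := Nat.cast_nonneg _
    linarith

lemma psi_fn (d : ℕ) : ∃ c : ℕ, ∀ (N : ℕ), 1 ≤ N → ∀ (p : Fin d → ℕ), (∀ j, p j ≤ N) →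
    Fn (d + 1) c (c * N) (psi N p) := by
  obtain ⟨c, hc⟩ := AA_fn (d := d) d
  refine ⟨2 * c + 1, fun N hN p hp => ?_⟩
  have h1 := hc N (tn N p 1) fun j L => tn_fn N hN p hp 1 (by simp) j L
  have h2 := hc N (tn N p (-1)) fun j L => tn_fn N hN p hp (-1) (by simp) j L
  have := ((Fn.const d 0 1).sub (h1.add h2)).relu
  refine this.mono (by omega) ?_
  have hN' : (1 : ℝ) ≤ N := by exact_mod_cast hN
  push_cast
  rw [abs_one]; linarith

lemma feat_fn (d m : ℕ) : ∃ c : ℕ, ∀ (N : ℕ), 1 ≤ N → ∀ (k : ℕ), 1 ≤ k → ∀ (p : Fin d → ℕ),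
    (∀ j, p j ≤ N) → ∀ l : List (Fin d), l.length = m →
    Fn (d + 1 + m * k) (c * k) (c * k ^ m * N) (feat k N p l) := by
  induction m with
  | zero =>
    obtain ⟨c, hc⟩ := psi_fn d
    refine ⟨c, fun N hN k hk p hp l hl => ?_⟩
    obtain rfl := List.length_eq_zero_iff.1 hl
    have := hc N hN p hp
    rw [zero_mul, add_zero]
    exact this.mono (Nat.le_mul_of_pos_right _ hk) (by simp)
  | succ m ih =>
    obtain ⟨c, hc⟩ := ih
    refine ⟨3 * c + 18, fun N hN k hk p hp l hl => ?_⟩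
    obtain ⟨j, l, rfl⟩ := List.exists_cons_of_length_eq_add_one hl
    have h := hc N hN k hk p hp l (by simpa using hl)
    have := h.mul' (tt_fn N hN p hp j _) k hk
    have hN' : (1 : ℝ) ≤ N := by exact_mod_cast hN
    have hk' : (1 : ℝ) ≤ k := by exact_mod_cast hk
    have e : d + 1 + (m + 1) * k = d + 1 + m * k + k := by ring
    rw [e]
    refine this.mono (by nlinarith) ?_
    push_cast
    have hkm : (1 : ℝ) ≤ (k : ℝ) ^ m := one_le_pow₀ hk'
    have h6 : (4 * N + 2 : ℝ) ≤ 6 * ((k : ℝ) ^ m * N) := by nlinarith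
    calc 3 * (k : ℝ) * (c * k ^ m * N + 4 * N + 2)
        ≤ 3 * (k : ℝ) * (c * k ^ m * N + 6 * ((k : ℝ) ^ m * N)) := by
          gcongr 3 * (k : ℝ) * ?_; linarith
      _ = _ := by ring

lemma taylor_one (r : ℕ) : ∀ (g : ℕ → ℝ → ℝ) (A : ℝ),
    (∀ m < r, ∀ t ∈ Set.Icc (0 : ℝ) 1, HasDerivWithinAt (g m) (g (m + 1) t) (Set.Icc 0 1) t) →
    (∀ t ∈ Set.Icc (0 : ℝ) 1, |g r t - g r 0| ≤ A) →
    ∀ t ∈ Set.Icc (0 : ℝ) 1,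
      |g 0 t - ∑ m ∈ Finset.range (r + 1), g m 0 * (t ^ m / (m.factorial : ℝ))| ≤ A := by
  induction r with
  | zero =>
    intro g A _ h t ht
    simpa using h t ht
  | succ r ih =>
    intro g A hd hA t ht
    have h0A : 0 ≤ A := le_trans (abs_nonneg _) (hA 0 (by simp))
    have key := ih (fun m => g (m + 1)) A (fun m hm => hd (m + 1) (by omega)) hA
    have hder : ∀ s ∈ Set.Icc (0 : ℝ) 1, HasDerivWithinAt
        (fun s => g 0 s - ∑ m ∈ Finset.range (r + 2), g m 0 * (s ^ m / (m.factorial : ℝ)))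
        (g 1 s - ∑ m ∈ Finset.range (r + 1), g (m + 1) 0 * (s ^ m / (m.factorial : ℝ)))
        (Set.Icc 0 1) s := by
      intro s hs
      refine (hd 0 (by omega) s hs).sub ?_
      simp only [Finset.sum_range_succ' _ (r + 1), pow_zero]
      refine HasDerivWithinAt.add_const _ ?_
      refine HasDerivWithinAt.fun_sum fun m _ => ?_
      refine HasDerivWithinAt.const_mul _ ?_
      have h1 := ((hasDerivAt_pow (m + 1) s).div_const ((m + 1).factorial : ℝ)).hasDerivWithinAt
        (s := Set.Icc 0 1)
      refine h1.congr_deriv ?_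
      have h2 : (m.factorial : ℝ) ≠ 0 := by positivity
      have h3 : ((m : ℝ) + 1) ≠ 0 := by positivity
      rw [Nat.factorial_succ, Nat.add_sub_cancel]
      push_cast
      field_simp
    have := (convex_Icc (0 : ℝ) 1).norm_image_sub_le_of_norm_hasDerivWithin_le hder
      (fun s hs => key s hs) (x := 0) (y := t) (by simp) ht
    have hz : ∑ m ∈ Finset.range (r + 2), g m 0 * ((0 : ℝ) ^ m / (m.factorial : ℝ)) = g 0 0 := by
      rw [Finset.sum_range_succ']; simp
    rw [hz, sub_self, sub_zero, sub_zero, Real.norm_eq_abs, Real.norm_eq_abs] at this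
    refine this.trans ?_
    rw [abs_of_nonneg ht.1]
    exact mul_le_of_le_one_right h0A ht.2

/-- the unit cube -/
abbrev QQ (d : ℕ) : Set (Fin d → ℝ) := Set.Icc (0 : Fin d → ℝ) 1

/-- partial derivative along a sequence of coordinates -/
def DD {d : ℕ} (f : (Fin d → ℝ) → ℝ) (m : ℕ) (α : Fin m → Fin d) (c : Fin d → ℝ) : ℝ :=
  iteratedFDerivWithin ℝ m f (QQ d) c (fun j => Pi.single (α j) 1)

lemma multilin_expand {d m : ℕ} (T : ContinuousMultilinearMap ℝ (fun _ : Fin m => Fin d → ℝ) ℝ)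
    (h : Fin d → ℝ) :
    T (fun _ => h) = ∑ α : Fin m → Fin d, (∏ j, h (α j)) * T (fun j => Pi.single (α j) 1) := by
  have e : h = ∑ i, h i • (Pi.single i (1 : ℝ) : Fin d → ℝ) := by
    funext j
    simp [Finset.sum_apply, Pi.single_apply]
  conv_lhs => rw [e]
  rw [ContinuousMultilinearMap.map_sum]
  refine Finset.sum_congr rfl fun α _ => ?_
  rw [ContinuousMultilinearMap.map_smul_univ T (fun j => h (α j))
    (fun j => (Pi.single (α j) (1 : ℝ) : Fin d → ℝ)), smul_eq_mul]

lemma uniqueDiffOn_QQ (d : ℕ) : UniqueDiffOn ℝ (QQ d) := by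
  have : QQ d = Set.pi Set.univ (fun _ => Set.Icc (0 : ℝ) 1) := by
    rw [Set.pi_univ_Icc]; rfl
  rw [this]
  exact UniqueDiffOn.univ_pi fun _ => uniqueDiffOn_Icc_zero_one

lemma prod_abs_le {d m : ℕ} {h : Fin d → ℝ} {δ : ℝ} (hδ : ‖h‖ ≤ δ) (α : Fin m → Fin d) :
    |∏ j, h (α j)| ≤ δ ^ m := by
  rw [Finset.abs_prod]
  calc ∏ j, |h (α j)| ≤ ∏ _j : Fin m, δ := by
        refine Finset.prod_le_prod (fun _ _ => abs_nonneg _) fun j _ => ?_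
        exact (norm_le_pi_norm h (α j)).trans hδ
    _ = _ := by simp

lemma taylor_cube {d r : ℕ} {ν B δ : ℝ} (hν : 0 < ν) (hB : 0 ≤ B) {f : (Fin d → ℝ) → ℝ}
    (hf : ContDiffOn ℝ r f (QQ d))
    (hh : ∀ x ∈ QQ d, ∀ y ∈ QQ d, x ≠ y → ∀ α : Fin r → Fin d,
      |DD f r α x - DD f r α y| ≤ B * ‖x - y‖ ^ ν)
    {c x : Fin d → ℝ} (hc : c ∈ QQ d) (hx : x ∈ QQ d) (hδ : ‖x - c‖ ≤ δ) :
    |f x - ∑ m ∈ Finset.range (r + 1), ∑ α : Fin m → Fin d,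
      DD f m α c / (m.factorial : ℝ) * ∏ j, (x - c) (α j)| ≤ (d : ℝ) ^ r * (δ ^ r * (B * δ ^ ν)) := by
  have hδ0 : 0 ≤ δ := (norm_nonneg _).trans hδ
  set h := x - c with hhdef
  have hcurve : ∀ t ∈ Set.Icc (0 : ℝ) 1, c + t • h ∈ QQ d := fun t ht => by
    have := (convex_Icc (0 : Fin d → ℝ) 1).add_smul_sub_mem hc hx ht
    exact this
  let g : ℕ → ℝ → ℝ := fun m t => iteratedFDerivWithin ℝ m f (QQ d) (c + t • h) (fun _ => h)
  have hgexp : ∀ m t, g m t = ∑ α : Fin m → Fin d, (∏ j, h (α j)) * DD f m α (c + t • h) :=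
    fun m t => multilin_expand _ h
  have hder : ∀ m < r, ∀ t ∈ Set.Icc (0 : ℝ) 1,
      HasDerivWithinAt (g m) (g (m + 1) t) (Set.Icc 0 1) t := by
    intro m hm t ht
    have hdiff := (hf.differentiableOn_iteratedFDerivWithin (m := m) (by exact_mod_cast hm)
      (uniqueDiffOn_QQ d) _ (hcurve t ht)).hasFDerivWithinAt
    have hline : HasDerivWithinAt (fun t : ℝ => c + t • h) h (Set.Icc 0 1) t := by
      have := ((hasDerivAt_id t).smul_const h).const_add c
      simpa using this.hasDerivWithinAt
    have hcomp := hdiff.comp_hasDerivWithinAt t hline hcurve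
    have happ := (ContinuousMultilinearMap.apply ℝ (fun _ : Fin m => Fin d → ℝ) ℝ
      (fun _ => h)).hasFDerivAt.comp_hasDerivWithinAt t hcomp
    exact happ
  have hA : ∀ t ∈ Set.Icc (0 : ℝ) 1, |g r t - g r 0| ≤ (d : ℝ) ^ r * (δ ^ r * (B * δ ^ ν)) := by
    intro t ht
    rw [hgexp, hgexp, ← Finset.sum_sub_distrib]
    refine (Finset.abs_sum_le_sum_abs _ _).trans ?_
    calc _ ≤ ∑ _α : Fin r → Fin d, δ ^ r * (B * δ ^ ν) := by
          refine Finset.sum_le_sum fun α _ => ?_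
          rw [← mul_sub, abs_mul]
          refine mul_le_mul (prod_abs_le hδ α) ?_ (abs_nonneg _) (by positivity)
          by_cases hne : c + t • h = c + (0 : ℝ) • h
          · rw [hne, sub_self, abs_zero]; positivity
          · refine (hh _ (hcurve t ht) _ (hcurve 0 (by simp)) hne α).trans ?_
            refine mul_le_mul_of_nonneg_left ?_ hB
            refine Real.rpow_le_rpow (norm_nonneg _) ?_ hν.le
            rw [zero_smul, add_zero, add_sub_cancel_left, norm_smul, Real.norm_eq_abs,
              abs_of_nonneg ht.1]
            exact (mul_le_of_le_one_left (norm_nonneg _) ht.2).trans hδ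
      _ = _ := by simp
  have := taylor_one r g _ hder hA 1 (by simp)
  have e0 : g 0 1 = f x := by
    simp [g, hhdef]
  rw [e0] at this
  convert this using 4 with m hm
  rw [hgexp, Finset.sum_mul]
  refine Finset.sum_congr rfl fun α _ => ?_
  rw [zero_smul, add_zero, one_pow]; ring

/-- multi-index sequences of length at most `r` -/
abbrev MI (d r : ℕ) := Σ m : Fin (r + 1), (Fin (m : ℕ) → Fin d)

lemma feat_fn_unif (d r : ℕ) : ∃ c : ℕ, ∀ (N : ℕ), 1 ≤ N → ∀ (k : ℕ), 1 ≤ k → ∀ (p : Fin d → ℕ),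
    (∀ j, p j ≤ N) → ∀ a : MI d r,
    Fn (d + 1 + r * k) (c * k) (c * k ^ (a.1 : ℕ) * N) (feat k N p (List.ofFn a.2)) := by
  choose c hc using fun m => feat_fn d m
  refine ⟨∑ m : Fin (r + 1), c m, fun N hN k hk p hp a => ?_⟩
  have h := hc a.1 N hN k hk p hp (List.ofFn a.2) (by simp)
  have hle : c a.1 ≤ ∑ m : Fin (r + 1), c m :=
    Finset.single_le_sum (f := fun m : Fin (r + 1) => c m) (fun _ _ => Nat.zero_le _)
      (Finset.mem_univ a.1)
  have hle' : (c a.1 : ℝ) ≤ ((∑ m : Fin (r + 1), c m : ℕ) : ℝ) := by exact_mod_cast hle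
  have h2 : Fn (d + 1 + (a.1 : ℕ) * k + (r - a.1) * k) (c a.1 * k) (c a.1 * k ^ (a.1 : ℕ) * N)
      (feat k N p (List.ofFn a.2)) := by
    have e : d + 1 + (a.1 : ℕ) * k = (d + (a.1 : ℕ) * k) + 1 := by ring
    rw [e] at h ⊢
    exact h.lift ((r - a.1) * k)
  have e : d + 1 + (a.1 : ℕ) * k + (r - a.1) * k = d + 1 + r * k := by
    rw [add_assoc, ← add_mul]
    congr 2
    have := a.1.2
    omega
  rw [e] at h2
  refine h2.mono (Nat.mul_le_mul_right _ hle) ?_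
  gcongr

lemma net_exists (d r : ℕ) : ∃ c : ℕ, ∀ (N : ℕ), 1 ≤ N → ∀ (k : ℕ), 1 ≤ k → ∀ (T B : ℝ), 1 ≤ T → 0 ≤ B →
    (k : ℝ) ≤ T * N → ∀ (K : ℕ) (w : Fin K → (Fin d → Fin (N + 1)) × MI d r → ℝ),
    (∀ i q, |w i q| ≤ B * (1 / N : ℝ) ^ (q.2.1 : ℕ)) → ∀ D, d + 1 + r * k ≤ D →
    MemNNClass d K ((N + 1) ^ d * Fintype.card (MI d r) * (c * k)) D
      ((N + 1 : ℝ) ^ d * Fintype.card (MI d r) * (B * c * T ^ r * N))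
      (fun x i => ∑ q, w i q * feat k N (gp q.1) (List.ofFn q.2.2) x) := by
  classical
  obtain ⟨c, hc⟩ := feat_fn_unif d r
  refine ⟨c, fun N hN k hk T B hT hB hkT K w hw D hD => ?_⟩
  have hN0 : (0 : ℝ) < N := by exact_mod_cast hN
  have hq := fun q : (Fin d → Fin (N + 1)) × MI d r => hc N hN k hk (gp q.1)
    (fun j => Nat.lt_succ_iff.1 (q.1 j).2) q.2
  choose S hS1 hS2 using hq
  have hcard : Fintype.card ((Fin d → Fin (N + 1)) × MI d r)
      = (N + 1) ^ d * Fintype.card (MI d r) := by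
    rw [Fintype.card_prod, Fintype.card_fun, Fintype.card_fin, Fintype.card_fin]
  have hlay := Lay.biUnion Finset.univ S _ fun q _ => hS1 q
  rw [Finset.card_univ, hcard] at hlay
  refine hlay.memNN (by positivity) _ (fun i => ?_) D hD
  have := LinC.sum Finset.univ (S := Finset.univ.biUnion S) (fun _ => B * c * T ^ r * N)
    (fun q x => w i q * feat k N (gp q.1) (List.ofFn q.2.2) x) fun q _ => by
      refine (((hS2 q).subset (Finset.subset_biUnion_of_mem S (Finset.mem_univ q))).smul
        (w i q)).mono ?_
      have h1 : ((k : ℝ) / N) ^ (q.2.1 : ℕ) ≤ T ^ r := by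
        have : (k : ℝ) / N ≤ T := by rw [div_le_iff₀ hN0]; exact hkT
        calc ((k : ℝ) / N) ^ (q.2.1 : ℕ) ≤ T ^ (q.2.1 : ℕ) := by gcongr
          _ ≤ T ^ r := pow_le_pow_right₀ hT (Nat.lt_succ_iff.1 q.2.1.2)
      calc |w i q| * (c * k ^ (q.2.1 : ℕ) * N)
          ≤ (B * (1 / N : ℝ) ^ (q.2.1 : ℕ)) * (c * k ^ (q.2.1 : ℕ) * N) := by
            gcongr; exact hw i q
        _ = B * c * ((k : ℝ) / N) ^ (q.2.1 : ℕ) * N := by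
            rw [div_pow, div_pow, one_pow]; ring
        _ ≤ _ := by gcongr
  refine this.mono (le_of_eq ?_)
  rw [Finset.sum_const, Finset.card_univ, hcard, nsmul_eq_mul]
  push_cast
  rfl

/-- grid node -/
def nd {d N : ℕ} (p : Fin d → Fin (N + 1)) : Fin d → ℝ := fun j => (gp p j : ℝ) / N

lemma nd_mem {d N : ℕ} (hN : 1 ≤ N) (p : Fin d → Fin (N + 1)) : nd p ∈ QQ d := by
  have hN0 : (0 : ℝ) < N := by exact_mod_cast hN
  refine ⟨fun j => ?_, fun j => ?_⟩
  · simp only [nd, Pi.zero_apply]; positivity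
  · simp only [nd, Pi.one_apply]
    rw [div_le_one hN0]
    exact_mod_cast Nat.lt_succ_iff.1 (p j).2

/-- coefficients of the approximant -/
def cf {d : ℕ} (f : (Fin d → ℝ) → ℝ) (N : ℕ) {r : ℕ} (q : (Fin d → Fin (N + 1)) × MI d r) : ℝ :=
  DD f q.2.1 q.2.2 (nd q.1) / ((q.2.1 : ℕ).factorial : ℝ) * (1 / N : ℝ) ^ (q.2.1 : ℕ)

lemma cf_abs {d : ℕ} {f : (Fin d → ℝ) → ℝ} {N r : ℕ} {B : ℝ} (hN : 1 ≤ N) (hB : 0 ≤ B)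
    (hb : ∀ m ≤ r, ∀ x ∈ QQ d, ∀ α : Fin m → Fin d, |DD f m α x| ≤ B)
    (q : (Fin d → Fin (N + 1)) × MI d r) : |cf f N q| ≤ B * (1 / N : ℝ) ^ (q.2.1 : ℕ) := by
  have h0 : (0 : ℝ) ≤ (1 / N : ℝ) ^ (q.2.1 : ℕ) := by positivity
  rw [cf, abs_mul, abs_of_nonneg h0]
  refine mul_le_mul_of_nonneg_right ?_ h0
  rw [abs_div, Nat.abs_cast]
  have h1 : (1 : ℝ) ≤ ((q.2.1 : ℕ).factorial : ℝ) := by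
    exact_mod_cast Nat.one_le_iff_ne_zero.2 (Nat.factorial_ne_zero _)
  exact (div_le_self (abs_nonneg _) h1).trans
    (hb _ (Nat.lt_succ_iff.1 q.2.1.2) _ (nd_mem hN _) _)

lemma node_err {d r k N : ℕ} {ν B : ℝ} (hν : 0 < ν) (hB : 0 ≤ B) (hN : 1 ≤ N) {f : (Fin d → ℝ) → ℝ}
    (hf : ContDiffOn ℝ r f (QQ d))
    (hb : ∀ m ≤ r, ∀ x ∈ QQ d, ∀ α : Fin m → Fin d, |DD f m α x| ≤ B)
    (hh : ∀ x ∈ QQ d, ∀ y ∈ QQ d, x ≠ y → ∀ α : Fin r → Fin d,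
      |DD f r α x - DD f r α y| ≤ B * ‖x - y‖ ^ ν)
    {x : Fin d → ℝ} (hx : x ∈ QQ d) (p : Fin d → Fin (N + 1)) (hp : psi N (gp p) x ≠ 0) :
    |psi N (gp p) x * f x - ∑ a : MI d r, cf f N (p, a) * feat k N (gp p) (List.ofFn a.2) x|
      ≤ psi N (gp p) x * ((d : ℝ) ^ r * ((1 / N : ℝ) ^ r * (B * (1 / N : ℝ) ^ ν)))
        + Fintype.card (MI d r) * (B * (r * (1 / 4) ^ k)) := by
  have hN0 : (0 : ℝ) < N := by exact_mod_cast hN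
  have htt : ∀ j, tt N (gp p) j x = N * (x - nd p) j := by
    intro j
    simp only [tt, nd, Pi.sub_apply]
    field_simp
  have hδ : ‖x - nd p‖ ≤ 1 / N := by
    rw [pi_norm_le_iff_of_nonneg (by positivity)]
    intro j
    have := psi_support N (gp p) x hp j
    rw [htt, abs_mul, abs_of_pos hN0] at this
    rw [Real.norm_eq_abs, le_div_iff₀ hN0, mul_comm]
    exact this.le
  have ht := taylor_cube hν hB hf hh (nd_mem hN p) hx hδ
  rw [Finset.sum_range (fun m => ∑ α : Fin m → Fin d,
      DD f m α (nd p) / (m.factorial : ℝ) * ∏ j, (x - nd p) (α j)),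
    ← Fintype.sum_sigma' (fun (m : Fin (r + 1)) (α : Fin (m : ℕ) → Fin d) =>
      DD f m α (nd p) / ((m : ℕ).factorial : ℝ) * ∏ j, (x - nd p) (α j))] at ht
  have hprod : ∀ a : MI d r, DD f a.1 a.2 (nd p) / ((a.1 : ℕ).factorial : ℝ) *
      ∏ j, (x - nd p) (a.2 j) = cf f N (p, a) * ((List.ofFn a.2).map fun j => tt N (gp p) j x).prod := by
    intro a
    rw [List.map_ofFn, List.prod_ofFn]
    simp only [Function.comp, htt, cf]
    rw [Finset.prod_mul_distrib, Finset.prod_const, Finset.card_univ, Fintype.card_fin, div_pow,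
      one_pow]
    field_simp
  simp only [hprod] at ht
  have e : psi N (gp p) x * f x - ∑ a : MI d r, cf f N (p, a) * feat k N (gp p) (List.ofFn a.2) x
      = psi N (gp p) x * (f x - ∑ a : MI d r, cf f N (p, a) *
          ((List.ofFn a.2).map fun j => tt N (gp p) j x).prod)
        - ∑ a : MI d r, cf f N (p, a) * (feat k N (gp p) (List.ofFn a.2) x - psi N (gp p) x *
          ((List.ofFn a.2).map fun j => tt N (gp p) j x).prod) := by
    simp only [mul_sub, Finset.sum_sub_distrib, Finset.mul_sum]
    have : ∀ a : MI d r, cf f N (p, a) * (psi N (gp p) x *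
          ((List.ofFn a.2).map fun j => tt N (gp p) j x).prod) = psi N (gp p) x * (cf f N (p, a) *
          ((List.ofFn a.2).map fun j => tt N (gp p) j x).prod) := fun a => by ring
    simp only [this]
    ring
  rw [e]
  refine (abs_sub _ _).trans (add_le_add ?_ ?_)
  · rw [abs_mul, abs_of_nonneg (psi_nonneg _ _ _)]
    exact mul_le_mul_of_nonneg_left ht (psi_nonneg _ _ _)
  · refine (Finset.abs_sum_le_sum_abs _ _).trans ?_
    calc _ ≤ ∑ _a : MI d r, B * (r * (1 / 4 : ℝ) ^ k) := by
          refine Finset.sum_le_sum fun a _ => ?_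
          rw [abs_mul]
          have har : ((a.1 : ℕ) : ℝ) ≤ r := by exact_mod_cast Nat.lt_succ_iff.1 a.1.2
          refine mul_le_mul ?_ ?_ (abs_nonneg _) hB
          · refine (cf_abs hN hB hb (p, a)).trans (mul_le_of_le_one_right hB ?_)
            refine pow_le_one₀ (by positivity) ?_
            rw [div_le_one hN0]; exact_mod_cast hN
          · refine (feat_err k N (gp p) _ x hp).2.trans ?_
            rw [List.length_ofFn]
            gcongr
      _ = _ := by simp

lemma total_err {d r k N : ℕ} {ν B : ℝ} (hν : 0 < ν) (hB : 0 ≤ B) (hN : 1 ≤ N) {f : (Fin d → ℝ) → ℝ}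
    (hf : ContDiffOn ℝ r f (QQ d))
    (hb : ∀ m ≤ r, ∀ x ∈ QQ d, ∀ α : Fin m → Fin d, |DD f m α x| ≤ B)
    (hh : ∀ x ∈ QQ d, ∀ y ∈ QQ d, x ≠ y → ∀ α : Fin r → Fin d,
      |DD f r α x - DD f r α y| ≤ B * ‖x - y‖ ^ ν)
    {x : Fin d → ℝ} (hx : x ∈ QQ d) :
    |f x - ∑ q : (Fin d → Fin (N + 1)) × MI d r, cf f N q * feat k N (gp q.1) (List.ofFn q.2.2) x|
      ≤ (d : ℝ) ^ r * ((1 / N : ℝ) ^ r * (B * (1 / N : ℝ) ^ ν))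
        + 2 ^ d * (Fintype.card (MI d r) * (B * (r * (1 / 4) ^ k))) := by
  classical
  set E1 := (d : ℝ) ^ r * ((1 / N : ℝ) ^ r * (B * (1 / N : ℝ) ^ ν)) with hE1
  set E2 := Fintype.card (MI d r) * (B * (r * (1 / 4 : ℝ) ^ k)) with hE2
  have hE20 : 0 ≤ E2 := by positivity
  have hs := psi_sum N x hx
  have e : f x = ∑ p : Fin d → Fin (N + 1), psi N (gp p) x * f x := by
    rw [← Finset.sum_mul, hs, one_mul]
  rw [Fintype.sum_prod_type]
  conv_lhs => rw [e]
  rw [← Finset.sum_sub_distrib]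
  refine (Finset.abs_sum_le_sum_abs _ _).trans ?_
  calc _ ≤ ∑ p : Fin d → Fin (N + 1), (psi N (gp p) x * E1 +
        if psi N (gp p) x ≠ 0 then E2 else 0) := by
        refine Finset.sum_le_sum fun p _ => ?_
        by_cases hp : psi N (gp p) x = 0
        · simp [hp, feat_zero]
        · rw [if_pos hp]
          exact node_err hν hB hN hf hb hh hx p hp
    _ ≤ E1 + 2 ^ d * E2 := by
        rw [Finset.sum_add_distrib, ← Finset.sum_mul, hs, one_mul, ← Finset.sum_filter,
          Finset.sum_const, nsmul_eq_mul]
        refine add_le_add le_rfl (mul_le_mul_of_nonneg_right ?_ hE20)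
        exact_mod_cast psi_count N x

lemma l2_err {d K : ℕ} {E : ℝ} (hE : 0 ≤ E) (g : (Fin d → ℝ) → Fin K → ℝ)
    (h : ∀ x ∈ QQ d, ∀ i, |g x i| ≤ E) :
    Real.sqrt (∫ x in Set.Icc (0 : Fin d → ℝ) 1, ∑ i, (g x i) ^ 2) ≤ E * Real.sqrt K := by
  have hvol : MeasureTheory.volume (Set.Icc (0 : Fin d → ℝ) 1) = 1 := by
    rw [Real.volume_Icc_pi]; simp
  have h1 := MeasureTheory.norm_setIntegral_le_of_norm_le_const (μ := MeasureTheory.volume)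
    (s := Set.Icc (0 : Fin d → ℝ) 1) (f := fun x => ∑ i, (g x i) ^ 2) (C := K * E ^ 2)
    (by rw [hvol]; exact ENNReal.one_lt_top) (fun x hx => by
      rw [Real.norm_eq_abs, abs_of_nonneg (Finset.sum_nonneg fun i _ => sq_nonneg _)]
      calc ∑ i, (g x i) ^ 2 ≤ ∑ _i : Fin K, E ^ 2 := by
            refine Finset.sum_le_sum fun i _ => ?_
            rw [← sq_abs]
            exact pow_le_pow_left₀ (abs_nonneg _) (h x hx i) 2
        _ = _ := by simp)
  rw [MeasureTheory.measureReal_def, hvol, ENNReal.toReal_one, mul_one] at h1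
  refine (Real.sqrt_le_sqrt ((le_abs_self _).trans h1)).trans (le_of_eq ?_)
  rw [Real.sqrt_mul (Nat.cast_nonneg _), Real.sqrt_sq hE, mul_comm]

/-- Approximation of Hölder maps `κ ∈ C_{τ,d,K,B}`, `τ = r + ν`, by norm-constrained
ReLU networks: there is `C > 0` depending only on `d`, `τ` and `B` such that for every
`K ≥ 1`, `k ≥ 1` and `κ ∈ C_{τ,d,K,B}` there is `φ ∈ F_{d,K}(𝒲, D, M)` with width
`𝒲 ≤ C 2^{2dk/τ} k`, depth `D = (k+1)(d+r)+2`, norm constraint `M ≤ C 2^{2(d+1)k/τ}`,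
and `‖κ − φ‖_{L²([0,1]^d)} ≤ C √K 2^{−2k}` (equivalently,
`‖κ − φ‖_{L²} ≲ √K M^{−τ/(d+1)}` with `𝒲 ≍ M^{d/(d+1)} log M` and `D ≍ log M`). -/
theorem holder_relu_network_approximation
    (d : ℕ) (hd : 1 ≤ d) (r : ℕ) (ν : ℝ) (hν : ν ∈ Set.Ioc (0 : ℝ) 1)
    (τ : ℝ) (hτ : τ = (r : ℝ) + ν) (B : ℝ) (hB : 0 < B) :
    ∃ C : ℝ, 0 < C ∧
      ∀ K : ℕ, 1 ≤ K → ∀ k : ℕ, 1 ≤ k →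
        ∀ κ : (Fin d → ℝ) → Fin K → ℝ, MemHolderClass r ν d K B κ →
          ∃ (𝒲 : ℕ) (M : ℝ) (φ : (Fin d → ℝ) → Fin K → ℝ),
            MemNNClass d K 𝒲 ((k + 1) * (d + r) + 2) M φ ∧
            (𝒲 : ℝ) ≤ C * (2 : ℝ) ^ (2 * (d : ℝ) * k / τ) * k ∧
            M ≤ C * (2 : ℝ) ^ (2 * ((d : ℝ) + 1) * k / τ) ∧
            Real.sqrt (∫ x in Set.Icc (0 : Fin d → ℝ) 1, ∑ i, (κ x i - φ x i) ^ 2)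
              ≤ C * Real.sqrt K / 2 ^ (2 * k) := by
  have hν0 : 0 < ν := hν.1
  have hτ0 : 0 < τ := by rw [hτ]; positivity
  obtain ⟨c, hc⟩ := net_exists d r
  set A : ℝ := (Fintype.card (MI d r) : ℝ) with hA
  have hlog : 0 < Real.log 2 := Real.log_pos (by norm_num)
  set T : ℝ := 1 + τ / (2 * Real.log 2) with hT
  have hT1 : 1 ≤ T := by rw [hT]; linarith [show 0 ≤ τ / (2 * Real.log 2) by positivity]
  set C1 : ℝ := 3 ^ d * A * c with hC1
  set C2 : ℝ := 3 ^ d * A * (B * c * T ^ r * 2) with hC2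
  set C3 : ℝ := (d : ℝ) ^ r * B + 2 ^ d * (A * (B * r)) with hC3
  have hC10 : 0 ≤ C1 := by positivity
  have hC20 : 0 ≤ C2 := by positivity
  have hC30 : 0 ≤ C3 := by positivity
  refine ⟨1 + C1 + C2 + C3, by positivity, fun K _ k hk κ hκ => ?_⟩
  set X : ℝ := (2 : ℝ) ^ (2 * (k : ℝ) / τ) with hX
  have hX1 : 1 ≤ X := Real.one_le_rpow (by norm_num) (by positivity)
  have hX0 : 0 < X := by linarith
  set N : ℕ := ⌈X⌉₊ with hN
  have hXN : X ≤ N := Nat.le_ceil X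
  have hNX : (N : ℝ) < X + 1 := Nat.ceil_lt_add_one hX0.le
  have hN1 : 1 ≤ N := by
    have : (1 : ℝ) ≤ N := hX1.trans hXN
    exact_mod_cast this
  have hN0 : (0 : ℝ) < N := by linarith
  have hkT : (k : ℝ) ≤ T * N := by
    have h1 : 2 * (k : ℝ) / τ * Real.log 2 + 1 ≤ X := by
      rw [hX, Real.rpow_def_of_pos (by norm_num), mul_comm]
      exact Real.add_one_le_exp _
    have h2 : (k : ℝ) = τ / (2 * Real.log 2) * (2 * (k : ℝ) / τ * Real.log 2) := by
      field_simp
    have h3 : 0 ≤ τ / (2 * Real.log 2) := by positivity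
    have h4 : τ / (2 * Real.log 2) * (2 * (k : ℝ) / τ * Real.log 2)
        ≤ τ / (2 * Real.log 2) * N := mul_le_mul_of_nonneg_left (by linarith) h3
    rw [hT, add_mul, one_mul]
    linarith
  have hnet := hc N hN1 k hk T B hT1 hB.le hkT K (fun i q => cf (fun x => κ x i) N q)
    (fun i q => cf_abs hN1 hB.le (hκ i).2.1 q) ((k + 1) * (d + r) + 2) (by nlinarith)
  have hXd : (2 : ℝ) ^ (2 * (d : ℝ) * k / τ) = X ^ d := by
    rw [hX, ← Real.rpow_mul_natCast (by norm_num)]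
    congr 1; ring
  have hXd1 : (2 : ℝ) ^ (2 * ((d : ℝ) + 1) * k / τ) = X ^ (d + 1) := by
    rw [hX, ← Real.rpow_mul_natCast (by norm_num)]
    congr 1; push_cast; ring
  have hN3 : (N + 1 : ℝ) ^ d ≤ 3 ^ d * X ^ d := by
    rw [← mul_pow]
    exact pow_le_pow_left₀ (by positivity) (by linarith) d
  refine ⟨_, _, _, hnet, ?_, ?_, ?_⟩
  · rw [hXd]
    push_cast
    rw [← hA]
    calc (N + 1 : ℝ) ^ d * A * (c * k) ≤ 3 ^ d * X ^ d * A * (c * k) := by gcongr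
      _ = C1 * X ^ d * k := by rw [hC1]; ring
      _ ≤ _ := by gcongr; linarith
  · rw [hXd1]
    calc (N + 1 : ℝ) ^ d * A * (B * c * T ^ r * N)
        ≤ 3 ^ d * X ^ d * A * (B * c * T ^ r * (2 * X)) := by gcongr; linarith
      _ = C2 * X ^ (d + 1) := by rw [hC2]; ring
      _ ≤ _ := by gcongr; linarith
  · have hpow : (1 / N : ℝ) ^ r * (1 / N : ℝ) ^ ν ≤ 1 / 2 ^ (2 * k) := by
      rw [← Real.rpow_natCast, ← Real.rpow_add (by positivity), ← hτ, Real.div_rpow (by norm_num)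
        hN0.le, Real.one_rpow]
      refine one_div_le_one_div_of_le (by positivity) ?_
      calc (2 : ℝ) ^ (2 * k) = X ^ τ := by
            rw [hX, ← Real.rpow_mul (by norm_num), div_mul_cancel₀ _ hτ0.ne', ← Real.rpow_natCast]
            push_cast; rfl
        _ ≤ _ := Real.rpow_le_rpow hX0.le hXN hτ0.le
    have hquarter : (1 / 4 : ℝ) ^ k = 1 / 2 ^ (2 * k) := by
      rw [pow_mul, div_pow, one_pow]; norm_num
    have hfin := l2_err (E := C3 * (1 / 2 ^ (2 * k))) (by positivity)
      (fun x i => κ x i - ∑ q : (Fin d → Fin (N + 1)) × MI d r,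
        cf (fun x => κ x i) N q * feat k N (gp q.1) (List.ofFn q.2.2) x) (fun x hx i => by
        refine (total_err hν0 hB.le hN1 (hκ i).1 (hκ i).2.1 (hκ i).2.2 hx).trans ?_
        rw [hquarter, ← hA]
        calc _ = (d : ℝ) ^ r * B * ((1 / N : ℝ) ^ r * (1 / N : ℝ) ^ ν)
              + 2 ^ d * (A * (B * r)) * (1 / 2 ^ (2 * k)) := by ring
          _ ≤ (d : ℝ) ^ r * B * (1 / 2 ^ (2 * k))
              + 2 ^ d * (A * (B * r)) * (1 / 2 ^ (2 * k)) := by gcongr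
          _ = _ := by rw [hC3]; ring)
    refine hfin.trans ?_
    calc C3 * (1 / 2 ^ (2 * k)) * Real.sqrt K = C3 * Real.sqrt K / 2 ^ (2 * k) := by ring
      _ ≤ _ := by gcongr; linarith

end
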